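/- Let G be a simple graph on [n] whose edge ideal I = I(G) has almost maximal finite index with index(I) > 1, and let C be an induced cycle of length > 3 in the complement graph Ḡ. Then there is at most one vertex in [n] \ V(C) which fails to be adjacent in Ḡ to all vertices of C. -/

import Mathlib

open Finsupp

namespace EP

variable (K : Type) [Field K]

/-! ## Simplicial chains over a linearly ordered vertex set -/

variable {V : Type} [Fintype V] [DecidableEq V] [LinearOrder V]

/-- Boundary of a single (oriented) face, given as a finset. -/
noncomputable def bdFace (s : Finset V) : Finset V →₀ K :=
  ∑ v ∈ s, ((-1 : K) ^ ((s.filter (fun w => w < v)).card)) • Finsupp.single (s.erase v) 1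

/-- The simplicial boundary map on the free module on all finsets of vertices
(the augmented oriented chain complex, with the empty set playing the role of
the `(-1)`-dimensional face). -/
noncomputable def bdS : (Finset V →₀ K) →ₗ[K] (Finset V →₀ K) :=
  Finsupp.lsum K fun s => LinearMap.toSpanSingleton K (Finset V →₀ K) (bdFace K s)

/-- Chains supported on faces of a complex `Δ` having `k` vertices. -/
noncomputable def faceSpan (Δ : Set (Finset V)) (k : ℕ) : Submodule K (Finset V →₀ K) :=
  Submodule.span K {c | ∃ F ∈ Δ, F.card = k ∧ c = Finsupp.single F 1}

/-- Dimension of the `d`-th reduced simplicial homology of `Δ` over `K`. -/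
noncomputable def redHomRank (Δ : Set (Finset V)) (d : ℕ) : ℕ :=
  Module.finrank K ↥(faceSpan K Δ (d+1) ⊓ LinearMap.ker (bdS K)) -
    Module.finrank K
      ↥(Submodule.map (bdS K) (faceSpan K Δ (d+2)) ⊓
          (faceSpan K Δ (d+1) ⊓ LinearMap.ker (bdS K)))

/-- The flag complex of a graph: faces are the cliques. -/
def flagComplex (G : SimpleGraph V) : Set (Finset V) :=
  {F | ∀ i ∈ F, ∀ j ∈ F, i ≠ j → G.Adj i j}

/-- The flag complex of the induced subgraph of `G` on `W`. -/
def flagComplexOn (G : SimpleGraph V) (W : Finset V) : Set (Finset V) :=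
  {F | (F : Set V) ⊆ (W : Set V) ∧ ∀ i ∈ F, ∀ j ∈ F, i ≠ j → G.Adj i j}

/-- The induced subcomplex of `Δ` on a vertex subset `W`. -/
def restrictComplex (Δ : Set (Finset V)) (W : Finset V) : Set (Finset V) :=
  {F | F ∈ Δ ∧ F ⊆ W}

/-- The oriented `1`-chain `[a,b]` (so `[a,b] = -[b,a]`). -/
noncomputable def edgeChain (a b : V) : Finset V →₀ K :=
  if a < b then Finsupp.single {a, b} 1 else -Finsupp.single {a, b} 1

/-- The oriented `2`-chain `[x,y,z]`, antisymmetric under transpositions. -/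
noncomputable def triChain (x y z : V) : Finset V →₀ K :=
  if (x < y ∧ y < z) ∨ (y < z ∧ z < x) ∨ (z < x ∧ x < y)
  then Finsupp.single {x, y, z} 1
  else -Finsupp.single {x, y, z} 1

/-! ## Graded Betti numbers of monomial ideals via the Taylor complex -/

variable {n : ℕ}

/-- The multidegree lcm of the monomial generators indexed by `S`. -/
def mlcm {r : ℕ} (g : Fin r → (Fin n → ℕ)) (S : Finset (Fin r)) : Fin n → ℕ :=
  fun x => S.sup fun k => g k x

/-- The differential of the Taylor complex tensored with the residue field `K`. -/
noncomputable def bdT {r : ℕ} (g : Fin r → (Fin n → ℕ)) :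
    (Finset (Fin r) →₀ K) →ₗ[K] (Finset (Fin r) →₀ K) :=
  Finsupp.lsum K fun S => LinearMap.toSpanSingleton K (Finset (Fin r) →₀ K)
    (∑ k ∈ S, if mlcm g (S.erase k) = mlcm g S
      then ((-1 : K) ^ ((S.filter (fun j => j < k)).card)) • Finsupp.single (S.erase k) (1 : K)
      else 0)

/-- The degree-`j` strand of the Taylor complex in homological degree `p`. -/
noncomputable def strand {r : ℕ} (g : Fin r → (Fin n → ℕ)) (p j : ℕ) :
    Submodule K (Finset (Fin r) →₀ K) :=
  Submodule.span K
    {c | ∃ S : Finset (Fin r), S.card = p ∧ (∑ x, mlcm g S x) = j ∧ c = Finsupp.single S 1}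

/-- `dim_K Tor_p(S/I, K)_j`, computed from the Taylor complex on the monomial
generators `g` of `I`. -/
noncomputable def torRank {r : ℕ} (g : Fin r → (Fin n → ℕ)) (p j : ℕ) : ℕ :=
  Module.finrank K ↥(strand K g p j ⊓ LinearMap.ker (bdT K g)) -
    Module.finrank K
      ↥(Submodule.map (bdT K g) (strand K g (p+1) j) ⊓
          (strand K g p j ⊓ LinearMap.ker (bdT K g)))

/-- The graded Betti number `β_{i,j}(I)` of the monomial ideal `I` generated by
the monomials with exponent vectors `g`, i.e. `dim_K Tor_i(I, K)_j = dim_K Tor_{i+1}(S/I, K)_j`. -/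
noncomputable def betti {r : ℕ} (g : Fin r → (Fin n → ℕ)) (i j : ℕ) : ℕ :=
  torRank K g (i+1) j

/-- The monomial with exponent vector `a`. -/
noncomputable def mono (a : Fin n → ℕ) : MvPolynomial (Fin n) K :=
  MvPolynomial.monomial (Finsupp.equivFunOnFinite.symm a) 1

/-- `g` is a list of exponent vectors of monomials generating the ideal `I`. -/
def IsGenSet {r : ℕ} (g : Fin r → (Fin n → ℕ)) (I : Ideal (MvPolynomial (Fin n) K)) : Prop :=
  Ideal.span (Set.range fun k => mono K (g k)) = I

/-- The ideal (generated by the monomials with exponent vectors `g`) has a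
`d`-linear resolution. -/
def HasLinRes {r : ℕ} (g : Fin r → (Fin n → ℕ)) (d : ℕ) : Prop :=
  ∀ i j, betti K g i j ≠ 0 → j = i + d

/-- Castelnuovo–Mumford regularity of a monomial ideal, from its Betti numbers. -/
noncomputable def regT {r : ℕ} (g : Fin r → (Fin n → ℕ)) : ℕ :=
  sSup {d | ∃ i j, betti K g i j ≠ 0 ∧ j = i + d}

/-! ## Edge ideals -/

/-- The edge ideal of a simple graph. -/
noncomputable def edgeIdeal (G : SimpleGraph (Fin n)) : Ideal (MvPolynomial (Fin n) K) :=
  Ideal.span {m | ∃ i j : Fin n, G.Adj i j ∧ m = MvPolynomial.X i * MvPolynomial.X j}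

/-- The edge set of `G` as a finset. -/
noncomputable def edgeFins (G : SimpleGraph (Fin n)) : Finset (Sym2 (Fin n)) :=
  letI : Fintype ↥G.edgeSet := Fintype.ofFinite _
  G.edgeFinset

/-- The canonical monomial (exponent vector) generators of the edge ideal of `G`. -/
noncomputable def edgeGens (G : SimpleGraph (Fin n)) : Fin (edgeFins G).card → (Fin n → ℕ) :=
  fun k x => if x ∈ ((edgeFins G).equivFin.symm k : Sym2 (Fin n)) then 1 else 0

/-- The graded Betti numbers `β_{i,j}(I(G))` of the edge ideal of `G` over `K`. -/
noncomputable def gBetti (G : SimpleGraph (Fin n)) (i j : ℕ) : ℕ :=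
  betti K (edgeGens G) i j

/-- The projective dimension `pd(I(G))` of the edge ideal of `G` over `K`. -/
noncomputable def gPd (G : SimpleGraph (Fin n)) : ℕ :=
  sSup {i | ∃ j, gBetti K G i j ≠ 0}

/-- The Green–Lazarsfeld index of the edge ideal of `G` over `K`
(`⊤` iff the ideal has a linear resolution). -/
noncomputable def gIndex (G : SimpleGraph (Fin n)) : ℕ∞ :=
  sInf {N : ℕ∞ | ∃ i j : ℕ, N = (i : ℕ∞) ∧ i + 2 < j ∧ gBetti K G i j ≠ 0}

/-- The regularity of the edge ideal of `G` over `K`. -/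
noncomputable def gReg (G : SimpleGraph (Fin n)) : ℕ :=
  sSup {d | ∃ i j, gBetti K G i j ≠ 0 ∧ j = i + d}

/-- The edge ideal of `G` has a (2-)linear resolution over `K`. -/
def gLinRes (G : SimpleGraph (Fin n)) : Prop :=
  ∀ i j, gBetti K G i j ≠ 0 → j = i + 2

/-- The edge ideal of `G` has almost maximal finite index over `K`:
`index(I(G)) = pd(I(G)) - 1` (with the index finite). -/
def AMFI (G : SimpleGraph (Fin n)) : Prop :=
  gIndex K G + 1 = (gPd K G : ℕ∞)

/-! ## Graph-theoretic notions -/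

/-- `H` contains an induced (chordless) cycle of length `l`. -/
def HasInducedCycle {W : Type} (H : SimpleGraph W) (l : ℕ) : Prop :=
  ∃ f : ZMod l → W, Function.Injective f ∧
    ∀ i j : ZMod l, H.Adj (f i) (f j) ↔ (j = i + 1 ∨ i = j + 1)

/-- `H` is chordal: it has no induced cycle of length greater than `3`. -/
def Chordal {W : Type} (H : SimpleGraph W) : Prop :=
  ∀ l : ℕ, 3 < l → ¬ HasInducedCycle H l

end EP

/-!
Let `W` be a set of vertices such that the complement graph `Ḡ[W]` has an edge `ab` lying on a
cycle but in no triangle. Then `β_{|W|-3,|W|}(I(G)) ≠ 0`. Indeed every `x ∈ W \ {a, b}` is joined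
in `G` to `a` or `b`, and one such edge for each `x` gives a minimal cover of `W`, hence a cycle of
the Taylor complex. To see that it is not a boundary, regard the cycle of `Ḡ[W]` through `ab` as a
sum of oriented edges and pair it with the volume form of the full simplex on `W`: this is a closed
cochain, and the signed sum of its values over complete flags of sets of generators is a cocycle of
the Taylor complex which is nonzero on the cover, because only the edge `ab` contributes there.

Now let `C` be the cycle of length `l`. The sets `C` and `C ∪ {v}` show that `index(I(G)) = l - 3`,
that `pd(I(G)) = l - 2`, and that no shorter set `W` as above exists. So the neighbours of `v` on
`C` are close together, at most two edges of `C` form a triangle with `v`, and likewise for `w`. As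
`l > 4`, some edge of `C` is in no triangle of `Ḡ[C ∪ {v, w}]`, whence `pd(I(G)) ≥ l - 1` if
`v ≠ w`.
-/

namespace EP

section EraseSum

variable (R : Type*) [CommRing R] {E M : Type*} [LinearOrder E] [AddCommGroup M] [Module R M]

/-- The sign `(-1) ^ #{j ∈ S | j < k}` with which `S.erase k` occurs in the boundary of the
oriented simplex `S`; the order on the vertices fixes the orientations. -/
def eraseSign (S : Finset E) (k : E) : R := (-1) ^ (S.filter (· < k)).card

theorem eraseSign_smul_eq_zero {S : Finset E} {k : E} {x : M} :
    eraseSign R S k • x = 0 ↔ x = 0 :=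
  (isUnit_one.neg.pow _).smul_eq_zero

theorem eraseSign_erase {S : Finset E} {j : E} (hj : j ∈ S) (k : E) :
    eraseSign R (S.erase j) k = (if j < k then -1 else 1) * eraseSign R S k := by
  unfold eraseSign
  rw [Finset.filter_erase]
  split_ifs with hjk
  · rw [← Finset.card_erase_add_one (Finset.mem_filter.2 ⟨hj, hjk⟩), pow_succ]
    ring
  · rw [Finset.erase_eq_of_notMem (by simp [hjk]), one_mul]

theorem eraseSign_mul_eraseSign_erase {S : Finset E} {j k : E} (hj : j ∈ S) (hk : k ∈ S)
    (hjk : j ≠ k) :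
    eraseSign R S j * eraseSign R (S.erase j) k =
      -(eraseSign R S k * eraseSign R (S.erase k) j) := by
  rw [eraseSign_erase R hj, eraseSign_erase R hk]
  rcases hjk.lt_or_gt with h | h <;> simp only [h, h.not_gt, if_true, if_false] <;> ring

/-- The simplicial coboundary on `M`-valued cochains of the full simplex on `E`. -/
def eraseSum : (Finset E → M) →ₗ[R] (Finset E → M) where
  toFun A S := ∑ k ∈ S, eraseSign R S k • A (S.erase k)
  map_add' A B := by
    funext S
    simp only [Pi.add_apply, smul_add, Finset.sum_add_distrib]
  map_smul' r A := by
    funext S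
    simp only [Pi.smul_apply, RingHom.id_apply, Finset.smul_sum, smul_comm r]

theorem eraseSum_apply (A : Finset E → M) (S : Finset E) :
    eraseSum R A S = ∑ k ∈ S, eraseSign R S k • A (S.erase k) := rfl

theorem eraseSum_eraseSum (A : Finset E → M) : eraseSum R (eraseSum R A) = 0 := by
  funext S
  simp only [eraseSum_apply, Pi.zero_apply, Finset.smul_sum, smul_smul]
  rw [Finset.sum_sigma']
  refine Finset.sum_involution (fun x _ => ⟨x.2, x.1⟩) ?_ ?_ ?_ fun _ _ => rfl
  all_goals
    rintro ⟨j, k⟩ hjk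
    simp only [Finset.mem_sigma, Finset.mem_erase] at hjk
  · rw [eraseSign_mul_eraseSign_erase R hjk.1 hjk.2.2 hjk.2.1.symm, Finset.erase_right_comm,
      ← add_smul, neg_add_cancel, zero_smul]
  · exact fun _ h => hjk.2.1 (congrArg Sigma.fst h)
  · simp only [Finset.mem_sigma, Finset.mem_erase]
    exact ⟨hjk.2.2, hjk.2.1.symm, hjk.1⟩

theorem eraseSum_comp {N : Type*} [AddCommGroup N] [Module R N] (f : M →ₗ[R] N)
    (A : Finset E → M) (S : Finset E) :
    eraseSum R (fun S => f (A S)) S = f (eraseSum R A S) := by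
  simp only [eraseSum_apply, map_sum, map_smul]

end EraseSum

section Cochain

variable {R V : Type*} [CommRing R]

/-- The `R`-valued cochains of the full simplex on `V`, of all degrees at once: in degree `m` a
cochain is a function of ordered `m`-tuples of vertices, so that `m = 0` is the augmentation. -/
abbrev Cochain (R V : Type*) := (m : ℕ) → (Fin m → V) → R

/-- The simplicial coboundary: the alternating sum over the faces of an ordered tuple. -/
def coboundary : Cochain R V →ₗ[R] Cochain R V where
  toFun ψ
    | 0 => 0
    | m + 1 => fun t => ∑ i : Fin (m + 1), (-1) ^ (i : ℕ) * ψ m (i.removeNth t)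
  map_add' ψ χ := by
    funext m t
    cases m <;> simp [mul_add, Finset.sum_add_distrib]
  map_smul' r ψ := by
    funext m t
    cases m <;> simp [Finset.mul_sum, mul_left_comm]

theorem coboundary_zero (ψ : Cochain R V) : coboundary ψ 0 = 0 := rfl

theorem coboundary_succ (ψ : Cochain R V) (m : ℕ) (t : Fin (m + 1) → V) :
    coboundary ψ (m + 1) t = ∑ i : Fin (m + 1), (-1) ^ (i : ℕ) * ψ m (i.removeNth t) := rfl

theorem coboundary_one (ψ : Cochain R V) (t : Fin 1 → V) : coboundary ψ 1 t = ψ 0 ![] := by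
  simp [coboundary_succ, Subsingleton.elim _ ![]]

/-- Evaluation at tuples starting with `v`, the homotopy that contracts the simplex to `v`. -/
def contract (v : V) : Cochain R V →ₗ[R] Cochain R V where
  toFun ψ m t := ψ (m + 1) (Fin.cons v t)
  map_add' _ _ := rfl
  map_smul' _ _ := rfl

theorem contract_apply (v : V) (ψ : Cochain R V) (m : ℕ) (t : Fin m → V) :
    contract v ψ m t = ψ (m + 1) (Fin.cons v t) := rfl

theorem coboundary_contract (v : V) (ψ : Cochain R V) :
    coboundary (contract v ψ) = ψ - contract v (coboundary ψ) := by
  rw [eq_sub_iff_add_eq]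
  funext m t
  have removeNth_succ_cons {m : ℕ} (i : Fin (m + 1)) (t : Fin (m + 1) → V) :
      i.succ.removeNth (Fin.cons v t : Fin (m + 2) → V) = Fin.cons v (i.removeNth t) := by
    funext j
    cases j using Fin.cases <;> simp [Fin.removeNth]
  cases m with
  | zero => simp [contract_apply, coboundary_succ, coboundary_zero]
  | succ m =>
    rw [Pi.add_apply, Pi.add_apply, contract_apply, coboundary_succ, coboundary_succ,
      Fin.sum_univ_succ (n := m + 1)]
    simp [removeNth_succ_cons, contract_apply, pow_succ]

end Cochain

section FlagCochain

variable {R V E : Type*} [CommRing R] [LinearOrder E] (u : Finset E → V) (θ : Cochain R V)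

/-- The signed sum of `θ(u(S₀), …, u(Sₙ₋₁), -)` over the complete flags `∅ = S₀ ⊂ ⋯ ⊂ Sₙ = S`. -/
def flagCochain : ℕ → Finset E → Cochain R V
  | 0 => Pi.single ∅ θ
  | n + 1 => eraseSum R fun S => contract (u S) (flagCochain n S)

theorem flagCochain_zero : flagCochain u θ 0 = Pi.single ∅ θ := rfl

theorem flagCochain_succ (n : ℕ) :
    flagCochain u θ (n + 1) = eraseSum R fun S => contract (u S) (flagCochain u θ n S) := rfl

theorem flagCochain_succ_apply (n : ℕ) (S : Finset E) (m : ℕ) (t : Fin m → V) :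
    flagCochain u θ (n + 1) S m t = ∑ k ∈ S, eraseSign R S k *
      flagCochain u θ n (S.erase k) (m + 1) (Fin.cons (u (S.erase k)) t) := by
  simp only [flagCochain_succ, eraseSum_apply, Finset.sum_apply, Pi.smul_apply, contract_apply,
    smul_eq_mul]

theorem flagCochain_of_not_injective
    (hθ : ∀ m (t : Fin m → V), ¬Function.Injective t → θ m t = 0) (n : ℕ) (S : Finset E) {m : ℕ}
    {t : Fin m → V} (ht : ¬Function.Injective t) : flagCochain u θ n S m t = 0 := by
  induction n generalizing S m with
  | zero =>
    rw [flagCochain_zero]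
    rcases eq_or_ne S ∅ with rfl | hS
    · rw [Pi.single_eq_same, hθ m t ht]
    · rw [Pi.single_eq_of_ne hS, Pi.zero_apply, Pi.zero_apply]
  | succ n ih =>
    rw [flagCochain_succ_apply]
    exact Finset.sum_eq_zero fun k _ => by
      rw [ih _ fun h => ht (Fin.cons_injective_iff.1 h).2, mul_zero]

theorem coboundary_flagCochain_succ (n : ℕ) (S : Finset E) :
    coboundary (flagCochain u θ (n + 1) S) = eraseSum R (flagCochain u θ n) S -
      eraseSum R (fun S => contract (u S) (coboundary (flagCochain u θ n S))) S := by
  rw [flagCochain_succ, ← eraseSum_comp, ← Pi.sub_apply, ← map_sub]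
  simp only [coboundary_contract]
  rfl

variable {u θ}

theorem coboundary_flagCochain_succ_eq_zero (hθ : coboundary θ = 0) {c : E → Set V}
    (hu : ∀ S v, (∀ k ∈ S, v ∉ c k) → ∀ k ∈ S, u S ∉ c k) (n : ℕ) {S : Finset E}
    (hS : ∀ k ∈ S, ∀ m (t : Fin m → V), (∀ i, t i ∉ c k) → θ m t = 0) {m : ℕ} {t : Fin m → V}
    (ht : ∀ i, ∀ k ∈ S, t i ∉ c k) : coboundary (flagCochain u θ (n + 1) S) m t = 0 := by
  induction n generalizing S m with
  | zero =>
    have hclosed : ∀ S, coboundary (flagCochain u θ 0 S) = 0 := by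
      intro S
      rcases eq_or_ne S ∅ with rfl | hS
      · rw [flagCochain_zero, Pi.single_eq_same, hθ]
      · rw [flagCochain_zero, Pi.single_eq_of_ne hS, map_zero]
    simp only [coboundary_flagCochain_succ, hclosed, map_zero, eraseSum_apply, smul_zero,
      Finset.sum_const_zero, sub_zero, Finset.sum_apply, Pi.smul_apply]
    refine Finset.sum_eq_zero fun k hk => ?_
    rw [flagCochain_zero]
    rcases eq_or_ne (S.erase k) ∅ with h | h
    · rw [h, Pi.single_eq_same, hS k hk m t fun i => ht i k hk, smul_zero]
    · rw [Pi.single_eq_of_ne h, Pi.zero_apply, Pi.zero_apply, smul_zero]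
  | succ n ih =>
    cases m with
    | zero => rw [coboundary_zero, Pi.zero_apply]
    | succ m =>
      rw [coboundary_flagCochain_succ, flagCochain_succ u θ n, eraseSum_eraseSum, Pi.zero_apply,
        zero_sub, ← flagCochain_succ u θ n, eraseSum_apply]
      simp only [Pi.neg_apply, Finset.sum_apply, Pi.smul_apply, contract_apply, neg_eq_zero]
      refine Finset.sum_eq_zero fun k _ => ?_
      have hsub : ∀ j ∈ S.erase k, j ∈ S := fun j => Finset.mem_of_mem_erase
      rw [ih (fun j hj => hS j (hsub j hj)), smul_zero]
      exact Fin.cases (hu _ (t 0) fun j hj => ht 0 j (hsub j hj)) fun i j hj => ht i j (hsub j hj)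

theorem flagCochain_succ_empty_tuple (hθ : coboundary θ = 0) {c : E → Set V}
    (hu : ∀ S v, (∀ k ∈ S, v ∉ c k) → ∀ k ∈ S, u S ∉ c k) (n : ℕ) {S : Finset E}
    (hS : ∀ k ∈ S, ∀ m (t : Fin m → V), (∀ i, t i ∉ c k) → θ m t = 0)
    {v : V} (hv : ∀ k ∈ S, v ∉ c k) : flagCochain u θ (n + 1) S 0 ![] = 0 := by
  rw [← coboundary_one (flagCochain u θ (n + 1) S) ![v]]
  exact coboundary_flagCochain_succ_eq_zero hθ hu n hS fun i => by
    simpa only [Matrix.cons_val_fin_one] using hv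

variable {P : Type*} [LinearOrder P] [WellFoundedLT P] {ι : P → V} {κ : P → E}

theorem flagCochain_image_eq_zero (hκ : Function.Injective κ)
    (hu : ∀ (B : Finset P) x, Minimal (· ∉ B) x → u (B.image κ) = ι x)
    (hθ : ∀ m (t : Fin m → V), ¬Function.Injective t → θ m t = 0) (n : ℕ) {B : Finset P} {m : ℕ}
    {t : Fin m → V} (ht : ∀ x ∉ B, ι x ∈ Set.range t)
    {s y : P} (hs : s ∉ B) (hy : y ∈ B) (hsy : s < y) :
    flagCochain u θ n (B.image κ) m t = 0 := by
  induction n generalizing B m with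
  | zero =>
    rw [flagCochain_zero, Pi.single_eq_of_ne, Pi.zero_apply, Pi.zero_apply]
    exact (Finset.image_nonempty.2 ⟨y, hy⟩).ne_empty
  | succ n ih =>
    rw [flagCochain_succ_apply, Finset.sum_image hκ.injOn]
    refine Finset.sum_eq_zero fun x _ => ?_
    obtain ⟨v, hv⟩ := exists_minimal_of_wellFoundedLT (· ∉ B.erase x) ⟨x, Finset.notMem_erase x B⟩
    rw [← Finset.image_erase hκ, hu _ v hv]
    have hs' : s ∉ B.erase x := fun h => hs (Finset.mem_of_mem_erase h)
    rcases eq_or_ne v x with rfl | hvx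
    · have hvs : v ≤ s := le_of_not_gt fun h => hv.not_prop_of_lt h hs'
      rw [ih _ hs' (Finset.mem_erase.2 ⟨(hvs.trans_lt hsy).ne', hy⟩), mul_zero]
      intro z hz
      rw [Fin.range_cons]
      rcases eq_or_ne z v with rfl | hzv
      · exact Set.mem_insert _ _
      · exact Set.mem_insert_of_mem _ (ht z fun h => hz (Finset.mem_erase.2 ⟨hzv, h⟩))
    · rw [flagCochain_of_not_injective u θ hθ, mul_zero]
      exact fun h => (Fin.cons_injective_iff.1 h).1
        (ht v fun h => hv.1 (Finset.mem_erase.2 ⟨hvx, h⟩))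

theorem flagCochain_image_ne_zero (hι : Function.Injective ι) (hκ : Function.Injective κ)
    (hu : ∀ (B : Finset P) x, Minimal (· ∉ B) x → u (B.image κ) = ι x)
    (hθ : ∀ m (t : Fin m → V), ¬Function.Injective t → θ m t = 0)
    (hθι : ∀ m (t : Fin m → V), Function.Injective t → Set.range t = Set.range ι → θ m t ≠ 0)
    {n : ℕ} {B : Finset P} (hB : IsLowerSet (B : Set P)) (hn : B.card = n) {m : ℕ}
    {t : Fin m → V} (ht : Function.Injective t) (hrange : Set.range t = ι '' (B : Set P)ᶜ) :
    flagCochain u θ n (B.image κ) m t ≠ 0 := by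
  induction n generalizing B m with
  | zero =>
    obtain rfl := Finset.card_eq_zero.1 hn
    rw [Finset.image_empty, flagCochain_zero, Pi.single_eq_same]
    exact hθι m t ht (by simpa using hrange)
  | succ n ih =>
    have hne : B.Nonempty := Finset.card_pos.1 (by omega)
    set x := B.max' hne
    have hx : x ∈ B := B.max'_mem hne
    have hcons {y} (hy : y ∈ B) : u ((B.erase y).image κ) = ι y :=
      hu _ y ⟨Finset.notMem_erase y B, fun z hz hzy => by
        by_contra h
        exact hz (Finset.mem_erase.2 ⟨fun e => h e.ge, hB hzy hy⟩)⟩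
    have hrange' (y : P) : Set.range (Fin.cons (ι y) t : Fin (m + 1) → V) =
        ι '' (↑(B.erase y) : Set P)ᶜ := by
      rw [Fin.range_cons, hrange, ← Set.image_insert_eq, Finset.coe_erase]
      congr 1
      ext z
      simp [imp_iff_or_not]
    rw [flagCochain_succ_apply, Finset.sum_image hκ.injOn, Finset.sum_eq_single_of_mem x hx]
    · rw [← Finset.image_erase hκ, hcons hx, ← smul_eq_mul, Ne, eraseSign_smul_eq_zero]
      refine ih ?_ (by rw [Finset.card_erase_of_mem hx, hn, Nat.add_sub_cancel]) ?_ (hrange' x)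
      · intro y z hzy hy
        rw [Finset.mem_coe, Finset.mem_erase] at hy ⊢
        exact ⟨fun e => hy.1 ((B.le_max' y hy.2).antisymm (e.ge.trans hzy)), hB hzy hy.2⟩
      · refine Fin.cons_injective_iff.2 ⟨?_, ht⟩
        rw [hrange, hι.mem_set_image]
        exact fun h => h hx
    · intro y hy hyx
      rw [← Finset.image_erase hκ, hcons hy, flagCochain_image_eq_zero hκ hu hθ n _
        (Finset.notMem_erase y B) (Finset.mem_erase.2 ⟨hyx.symm, hx⟩)
        ((B.le_max' y hy).lt_of_ne hyx), mul_zero]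
      intro z hz
      rw [hrange' y]
      exact Set.mem_image_of_mem ι hz

end FlagCochain

section CoverCocycle

variable {R V E P : Type*} [CommRing R] [LinearOrder E] [LinearOrder P] {ι : P → V} {κ : P → E}
  {c : E → Set V}

theorem exists_uncovered_choice [WellFoundedLT P] [Nonempty V]
    (hικ : ∀ x y, ι x ∈ c (κ y) ↔ x = y) :
    ∃ u : Finset E → V, (∀ S v, (∀ k ∈ S, v ∉ c k) → ∀ k ∈ S, u S ∉ c k) ∧
      ∀ (B : Finset P) x, Minimal (· ∉ B) x → u (B.image κ) = ι x := by
  have hchoice (S : Finset E) : ∃ w, (∀ v, (∀ k ∈ S, v ∉ c k) → ∀ k ∈ S, w ∉ c k) ∧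
      ∀ x, Minimal (fun x => ∀ k ∈ S, ι x ∉ c k) x → w = ι x := by
    by_cases hP : ∃ x, ∀ k ∈ S, ι x ∉ c k
    · obtain ⟨x, hx⟩ := exists_minimal_of_wellFoundedLT _ hP
      exact ⟨ι x, fun _ _ => hx.1, fun y hy => congrArg ι <|
        (le_total x y).elim (fun h => h.antisymm (hy.2 hx.1 h)) fun h => (hx.2 hy.1 h).antisymm h⟩
    · by_cases hV : ∃ v, ∀ k ∈ S, v ∉ c k
      · obtain ⟨v, hv⟩ := hV
        exact ⟨v, fun _ _ => hv, fun x hx => absurd ⟨x, hx.1⟩ hP⟩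
      · exact ⟨Classical.arbitrary V, fun v hv => absurd ⟨v, hv⟩ hV,
          fun x hx => absurd ⟨x, hx.1⟩ hP⟩
  choose u hu huι using hchoice
  refine ⟨u, hu, fun B x hx => huι _ x ?_⟩
  have huncovered (x : P) : (∀ k ∈ B.image κ, ι x ∉ c k) ↔ x ∉ B := by
    simp only [Finset.forall_mem_image, hικ]
    exact ⟨fun h hx => h hx rfl, fun h y hy e => h (e ▸ hy)⟩
  simpa only [huncovered] using hx

theorem exists_cover_cocycle [Fintype P] [Nonempty P] {θ : Cochain R V}
    (hικ : ∀ x y, ι x ∈ c (κ y) ↔ x = y) (hclosed : coboundary θ = 0)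
    (hθ : ∀ m (t : Fin m → V), ¬Function.Injective t → θ m t = 0)
    (hθι : ∀ m (t : Fin m → V), Function.Injective t → Set.range t = Set.range ι → θ m t ≠ 0) :
    ∃ φ : Finset E → R, φ (Finset.univ.image κ) ≠ 0 ∧ eraseSum R φ = 0 ∧
      ∀ S, (∀ k ∈ S, ∀ m (t : Fin m → V), (∀ i, t i ∉ c k) → θ m t = 0) →
        (∃ v, ∀ k ∈ S, v ∉ c k) → φ S = 0 := by
  have hι : Function.Injective ι := fun x y h => (hικ x y).1 (h ▸ (hικ y y).2 rfl)
  have hκ : Function.Injective κ := fun x y h => (hικ x y).1 (h ▸ (hικ x x).2 rfl)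
  have : Nonempty V := ‹Nonempty P›.map ι
  obtain ⟨u, hu, huι⟩ := exists_uncovered_choice hικ
  obtain ⟨n, hn⟩ := Nat.exists_eq_succ_of_ne_zero (Fintype.card_ne_zero (α := P))
  refine ⟨fun S => flagCochain u θ (n + 1) S 0 ![], ?_, ?_, ?_⟩
  · refine flagCochain_image_ne_zero hι hκ huι hθ hθι ?_ hn ?_ ?_
    · exact fun _ _ _ _ => Finset.mem_coe.2 (Finset.mem_univ _)
    · exact Function.injective_of_subsingleton _
    · simp
  · funext S
    have h := congrFun (congrFun (congrFun (eraseSum_eraseSum R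
      fun S => contract (u S) (flagCochain u θ n S)) S) 0) ![]
    simpa only [flagCochain_succ, eraseSum_apply, Finset.sum_apply, Pi.smul_apply,
      Pi.zero_apply] using h
  · rintro S hS ⟨v, hv⟩
    exact flagCochain_succ_empty_tuple hclosed hu n hS hv

end CoverCocycle

section Determinant

variable (R : Type*) {V : Type*} [CommRing R] [Fintype V] [DecidableEq V]

/-- The cochain concentrated in degree `Fintype.card V` whose value on an enumeration of `V` is
the sign of that enumeration. -/
noncomputable def volumeCochain : Cochain R V := fun m t =>
  if h : Fintype.card V = m then
    ((1 : Matrix V V R).submatrix t (Fintype.equivFinOfCardEq h).symm).det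
  else 0

theorem volumeCochain_apply {m : ℕ} (h : Fintype.card V = m) (t : Fin m → V) :
    volumeCochain R m t =
      ((1 : Matrix V V R).submatrix t (Fintype.equivFinOfCardEq h).symm).det :=
  dif_pos h

theorem volumeCochain_ne_zero_iff [Nontrivial R] {m : ℕ} {t : Fin m → V} :
    volumeCochain R m t ≠ 0 ↔ Function.Bijective t := by
  by_cases h : Fintype.card V = m
  · rw [volumeCochain_apply R h]
    set e := Fintype.equivFinOfCardEq h
    refine ⟨fun hdet => ?_, fun ht => ?_⟩
    · refine (Fintype.bijective_iff_injective_and_card t).2 ⟨fun i j hij => ?_, by simp [h]⟩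
      by_contra hne
      exact hdet (Matrix.det_zero_of_row_eq hne (funext fun k => by
        simp only [Matrix.submatrix_apply, Matrix.one_apply, hij]))
    · let σ : Equiv.Perm V := e.trans (Equiv.ofBijective t ht)
      have hσ : (1 : Matrix V V R).submatrix t e.symm =
          ((1 : Matrix V V R).submatrix σ id).submatrix e.symm e.symm := by
        ext i j
        simp [Matrix.one_apply, σ]
      rw [hσ, Matrix.det_submatrix_equiv_self, Matrix.det_permute, Matrix.det_one, mul_one]
      exact ((Equiv.Perm.sign σ).isUnit.map (Int.castRingHom R)).ne_zero
  · refine iff_of_false (not_not.2 (dif_neg h)) fun ht => h ?_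
    rw [← Fintype.card_of_bijective ht, Fintype.card_fin]

theorem coboundary_volumeCochain : coboundary (volumeCochain R : Cochain R V) = 0 := by
  funext m t
  cases m with
  | zero => rfl
  | succ m =>
    rw [coboundary_succ]
    by_cases h : Fintype.card V = m
    · set e := Fintype.equivFinOfCardEq h
      obtain ⟨i, j, hij, ht⟩ := Fintype.exists_ne_map_eq_of_card_lt t (by simp [h])
      let M : Matrix (Fin (m + 1)) (Fin (m + 1)) R :=
        Matrix.of fun i => Fin.cons 1 fun j => if t i = e.symm j then 1 else 0
      have hM : M.det = 0 := Matrix.det_zero_of_row_eq hij (by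
        funext k
        simp only [M, Matrix.of_apply, ht])
      have hminor (i : Fin (m + 1)) : M.submatrix i.succAbove Fin.succ =
          (1 : Matrix V V R).submatrix (i.removeNth t) e.symm := rfl
      rw [Matrix.det_succ_column_zero] at hM
      simpa [volumeCochain_apply R h, hminor, M] using hM
    · exact Finset.sum_eq_zero fun i _ => by rw [volumeCochain, dif_neg h, mul_zero]

end Determinant

section WalkCochain

variable (R : Type*) {V : Type*} [CommRing R] [Fintype V] [DecidableEq V] {H : SimpleGraph V}

/-- The volume cochain with the edge `xy` inserted in front. -/
noncomputable def edgeCochain (x y : V) : Cochain R V := contract y (contract x (volumeCochain R))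

theorem edgeCochain_ne_zero_iff [Nontrivial R] {x y : V} {m : ℕ} {t : Fin m → V} :
    edgeCochain R x y m t ≠ 0 ↔
      Function.Bijective (Fin.cons x (Fin.cons y t : Fin (m + 1) → V) : Fin (m + 2) → V) :=
  volumeCochain_ne_zero_iff R

theorem coboundary_edgeCochain (x y : V) : coboundary (edgeCochain R x y) =
    contract x (volumeCochain R) - contract y (volumeCochain R) := by
  rw [edgeCochain, coboundary_contract, coboundary_contract, coboundary_volumeCochain, map_zero,
    sub_zero]

/-- The sum of the edge cochains along a walk. -/
noncomputable def walkCochain {x y : V} : H.Walk x y → Cochain R V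
  | .nil => 0
  | .cons (u := x) (v := z) _ p => edgeCochain R x z + walkCochain p

theorem coboundary_walkCochain {x y : V} (p : H.Walk x y) : coboundary (walkCochain R p) =
    contract x (volumeCochain R) - contract y (volumeCochain R) := by
  induction p with
  | nil => rw [walkCochain, map_zero, sub_self]
  | cons _ p ih => rw [walkCochain, map_add, ih, coboundary_edgeCochain, sub_add_sub_cancel]

variable [Nontrivial R] {m : ℕ} {t : Fin m → V}

theorem edgeCochain_of_not_injective (x y : V) (ht : ¬Function.Injective t) :
    edgeCochain R x y m t = 0 := by
  by_contra h
  exact ht (Fin.cons_injective_iff.1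
    (Fin.cons_injective_iff.1 ((edgeCochain_ne_zero_iff R).1 h).injective).2).2

theorem edgeCochain_of_avoids {x y g h : V} (hgh : g ≠ h) (he : s(g, h) ≠ s(x, y))
    (hg : g ∉ Set.range t) (hh : h ∉ Set.range t) : edgeCochain R x y m t = 0 := by
  by_contra hne
  have hrange := ((edgeCochain_ne_zero_iff R).1 hne).surjective.range_eq
  rw [Fin.range_cons, Fin.range_cons, Set.eq_univ_iff_forall] at hrange
  have hg' := hrange g
  have hh' := hrange h
  simp only [Set.mem_insert_iff, hg, hh, or_false] at hg' hh'
  refine he (Sym2.eq_iff.2 ?_)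
  grind

theorem walkCochain_of_not_injective {x y : V} (p : H.Walk x y) (ht : ¬Function.Injective t) :
    walkCochain R p m t = 0 := by
  induction p with
  | nil => rfl
  | cons _ _ ih =>
    rw [walkCochain, Pi.add_apply, Pi.add_apply, edgeCochain_of_not_injective R _ _ ht, ih,
      add_zero]

theorem walkCochain_of_avoids {x y g h : V} (p : H.Walk x y) (hgh : g ≠ h) (hadj : ¬H.Adj g h)
    (hg : g ∉ Set.range t) (hh : h ∉ Set.range t) : walkCochain R p m t = 0 := by
  induction p with
  | nil => rfl
  | cons hxz _ ih =>
    rw [walkCochain, Pi.add_apply, Pi.add_apply, ih, add_zero]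
    exact edgeCochain_of_avoids R hgh
      (fun he => hadj (H.mem_edgeSet.1 (he ▸ H.mem_edgeSet.2 hxz))) hg hh

end WalkCochain

theorem exists_closed_cochain (R : Type*) {V : Type*} [CommRing R] [Nontrivial R] [Finite V]
    (H : SimpleGraph V) {a b : V} (hab : H.Adj a b)
    (hreach : (H.deleteEdges {s(a, b)}).Reachable a b) :
    ∃ θ : Cochain R V, coboundary θ = 0 ∧
      (∀ m (t : Fin m → V), ¬Function.Injective t → θ m t = 0) ∧
      (∀ g h, g ≠ h → ¬H.Adj g h → ∀ m (t : Fin m → V), g ∉ Set.range t → h ∉ Set.range t →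
        θ m t = 0) ∧
      ∀ m (t : Fin m → V), Function.Injective t → Set.range t = {a, b}ᶜ → θ m t ≠ 0 := by
  classical
  have := Fintype.ofFinite V
  obtain ⟨p⟩ := hreach.symm
  refine ⟨edgeCochain R a b + walkCochain R p, ?_, ?_, ?_, ?_⟩
  · rw [map_add, coboundary_edgeCochain, coboundary_walkCochain, sub_add_sub_cancel, sub_self]
  · intro m t ht
    rw [Pi.add_apply, Pi.add_apply, edgeCochain_of_not_injective R _ _ ht,
      walkCochain_of_not_injective R p ht, add_zero]
  · intro g h hgh hadj m t hg hh
    rw [Pi.add_apply, Pi.add_apply, walkCochain_of_avoids R p hgh _ hg hh, add_zero]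
    · exact edgeCochain_of_avoids R hgh
        (fun he => hadj (H.mem_edgeSet.1 (he ▸ H.mem_edgeSet.2 hab))) hg hh
    · exact fun h => hadj (H.deleteEdges_le _ h)
  · intro m t ht hrange
    have ha : a ∉ Set.range t := by simp [hrange]
    have hb : b ∉ Set.range t := by simp [hrange]
    rw [Pi.add_apply, Pi.add_apply, walkCochain_of_avoids R p hab.ne (by simp) ha hb, add_zero,
      edgeCochain_ne_zero_iff]
    constructor
    · simp only [Fin.cons_injective_iff, Fin.range_cons, Set.mem_insert_iff, not_or]
      exact ⟨⟨hab.ne, ha⟩, hb, ht⟩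
    · rw [← Set.range_eq_univ, Fin.range_cons, Fin.range_cons, hrange]
      simpa only [Set.insert_union, Set.singleton_union] using Set.union_compl_self {a, b}

section TaylorComplex

variable {K : Type} [Field K] {n r : ℕ}

theorem torRank_ne_zero {g : Fin r → Fin n → ℕ} {p j : ℕ} (L : (Finset (Fin r) →₀ K) →ₗ[K] K)
    (hL : L ∘ₗ bdT K g = 0) {z : Finset (Fin r) →₀ K} (hz : z ∈ strand K g p j)
    (hbd : bdT K g z = 0) (hLz : L z ≠ 0) : torRank K g p j ≠ 0 := by
  have hlt : Submodule.map (bdT K g) (strand K g (p + 1) j) ⊓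
      (strand K g p j ⊓ LinearMap.ker (bdT K g)) < strand K g p j ⊓ LinearMap.ker (bdT K g) := by
    refine inf_le_right.lt_of_ne fun h => ?_
    obtain ⟨y, -, rfl⟩ := (h.ge ⟨hz, hbd⟩).1
    exact hLz (LinearMap.congr_fun hL y)
  exact (Nat.sub_pos_of_lt (Submodule.finrank_lt_finrank_of_lt hlt)).ne'

variable {g : Fin r → Fin n → ℕ} {c : Fin r → Finset (Fin n)}

theorem mlcm_apply_of_squarefree (hg : ∀ k x, g k x = if x ∈ c k then 1 else 0)
    (S : Finset (Fin r)) (x : Fin n) : mlcm g S x = if x ∈ S.biUnion c then 1 else 0 := by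
  simp only [mlcm, hg]
  split_ifs with hx
  · obtain ⟨k, hk, hxk⟩ := Finset.mem_biUnion.1 hx
    refine le_antisymm (Finset.sup_le fun j _ => by split_ifs <;> simp) ?_
    exact (if_pos hxk).ge.trans (Finset.le_sup (f := fun k => if x ∈ c k then 1 else 0) hk)
  · exact Nat.eq_zero_of_le_zero (Finset.sup_le fun k hk =>
      (if_neg fun h => hx (Finset.mem_biUnion.2 ⟨k, hk, h⟩)).le)

theorem mlcm_eq_mlcm_iff (hg : ∀ k x, g k x = if x ∈ c k then 1 else 0) (S T : Finset (Fin r)) :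
    mlcm g S = mlcm g T ↔ S.biUnion c = T.biUnion c := by
  refine ⟨fun h => ?_, fun h => funext fun x => ?_⟩
  · ext x
    have hx := congrFun h x
    rw [mlcm_apply_of_squarefree hg, mlcm_apply_of_squarefree hg] at hx
    split_ifs at hx with hS hT hT
    · exact iff_of_true hS hT
    · exact iff_of_false hS hT
  · rw [mlcm_apply_of_squarefree hg, mlcm_apply_of_squarefree hg, h]

theorem sum_mlcm (hg : ∀ k x, g k x = if x ∈ c k then 1 else 0) (S : Finset (Fin r)) :
    ∑ x, mlcm g S x = (S.biUnion c).card := by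
  simp only [mlcm_apply_of_squarefree hg, Finset.sum_boole, Finset.filter_univ_mem, Nat.cast_id]

theorem bdT_single (hg : ∀ k x, g k x = if x ∈ c k then 1 else 0) (S : Finset (Fin r)) :
    bdT K g (Finsupp.single S 1) = ∑ k ∈ S, if (S.erase k).biUnion c = S.biUnion c
      then eraseSign K S k • Finsupp.single (S.erase k) (1 : K) else 0 := by
  simp [bdT, mlcm_eq_mlcm_iff hg, eraseSign]

theorem torRank_card_ne_zero (hg : ∀ k x, g k x = if x ∈ c k then 1 else 0) {W : Finset (Fin n)}
    {S₀ : Finset (Fin r)} (hcover : S₀.biUnion c = W)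
    (hmin : ∀ k ∈ S₀, (S₀.erase k).biUnion c ≠ W) {φ : Finset (Fin r) → K}
    (hφ₀ : φ S₀ ≠ 0) (hφ : eraseSum K φ = 0)
    (hφW : ∀ S : Finset (Fin r), S.biUnion c ⊂ W → φ S = 0) :
    torRank K g S₀.card W.card ≠ 0 := by
  let L : (Finset (Fin r) →₀ K) →ₗ[K] K :=
    Finsupp.lsum K fun S => LinearMap.toSpanSingleton K K (if S.biUnion c = W then φ S else 0)
  have hL (S) : L (Finsupp.single S 1) = if S.biUnion c = W then φ S else 0 := by simp [L]
  refine torRank_ne_zero L ?_ (Submodule.subset_span ⟨S₀, rfl, by rw [sum_mlcm hg, hcover], rfl⟩)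
    ?_ (by rwa [hL, if_pos hcover])
  · refine Finsupp.lhom_ext' fun S => LinearMap.ext_ring ?_
    simp only [LinearMap.comp_apply, Finsupp.lsingle_apply, LinearMap.zero_apply]
    rw [bdT_single hg, map_sum]
    by_cases hS : S.biUnion c = W
    · refine Eq.trans (Finset.sum_congr rfl fun k _ => ?_) (congrFun hφ S)
      rw [hS]
      split_ifs with hk
      · rw [map_smul, hL, if_pos hk]
      · rw [hφW, smul_zero, map_zero]
        exact ((Finset.biUnion_subset_biUnion_of_subset_left c (Finset.erase_subset k S)).trans
          hS.le).ssubset_of_ne hk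
    · refine Finset.sum_eq_zero fun k _ => ?_
      split_ifs with hk
      · rw [map_smul, hL, if_neg (hk ▸ hS), smul_zero]
      · exact map_zero L
  · rw [bdT_single hg, hcover]
    exact Finset.sum_eq_zero fun k hk => if_neg (hmin k hk)

end TaylorComplex

section EdgeIdeal

variable {n : ℕ} {G : SimpleGraph (Fin n)}

variable (G) in
/-- The edge of `G` corresponding to the `k`-th generator of the edge ideal. -/
noncomputable def genEdge (k : Fin (edgeFins G).card) : Sym2 (Fin n) := (edgeFins G).equivFin.symm k

theorem mem_edgeFins {e : Sym2 (Fin n)} : e ∈ edgeFins G ↔ e ∈ G.edgeSet := by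
  simp only [edgeFins, SimpleGraph.mem_edgeFinset]

theorem genEdge_mem_edgeSet (k : Fin (edgeFins G).card) : genEdge G k ∈ G.edgeSet :=
  mem_edgeFins.1 ((edgeFins G).equivFin.symm k).2

theorem exists_genEdge_eq {i j : Fin n} (hij : G.Adj i j) : ∃ k, genEdge G k = s(i, j) :=
  ⟨(edgeFins G).equivFin ⟨s(i, j), mem_edgeFins.2 hij⟩, by rw [genEdge, Equiv.symm_apply_apply]⟩

theorem edgeGens_apply (k : Fin (edgeFins G).card) (x : Fin n) :
    edgeGens G k x = if x ∈ (genEdge G k).toFinset then 1 else 0 := by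
  simp only [edgeGens, genEdge, Sym2.mem_toFinset]

variable {K : Type} [Field K] {W : Finset (Fin n)}

theorem gBetti_ne_zero_of_cochain {θ : Cochain K W} (hclosed : coboundary θ = 0)
    (hθ : ∀ m (t : Fin m → W), ¬Function.Injective t → θ m t = 0)
    (hθG : ∀ g h : W, G.Adj g h → ∀ m (t : Fin m → W),
      g ∉ Set.range t → h ∉ Set.range t → θ m t = 0)
    {P : Type*} [LinearOrder P] [Fintype P] {ι : P → W}
    (hθι : ∀ m (t : Fin m → W), Function.Injective t →
      Set.range t = Set.range ι → θ m t ≠ 0)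
    {κ : P → Fin (edgeFins G).card} (hικ : ∀ x y, (ι x : Fin n) ∈ genEdge G (κ y) ↔ x = y)
    (hcover : (Finset.univ.image κ).biUnion (fun k => (genEdge G k).toFinset) = W)
    {i : ℕ} (hi : Fintype.card P = i + 1) : gBetti K G i W.card ≠ 0 := by
  have : Nonempty P := Fintype.card_pos_iff.1 (by omega)
  have hκ : Function.Injective κ := fun x y h => (hικ x y).1 (h ▸ (hικ x x).2 rfl)
  obtain ⟨φ, hφ₀, hφ, hφW⟩ :=
    exists_cover_cocycle (c := fun k => {v : W | (v : Fin n) ∈ genEdge G k}) hικ hclosed hθ hθι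
  have hcard : (Finset.univ.image κ).card = i + 1 := by
    rw [Finset.card_image_of_injective _ hκ, Finset.card_univ, hi]
  rw [gBetti, betti, ← hcard]
  refine torRank_card_ne_zero edgeGens_apply hcover ?_ hφ₀ hφ fun S hS => hφW S ?_ ?_
  · intro k hk hkW
    obtain ⟨x, -, rfl⟩ := Finset.mem_image.1 hk
    have hx := hkW.ge (ι x).2
    simp [← Finset.image_erase hκ, hικ] at hx
  · intro k hk m t ht
    have hkW : (genEdge G k).toFinset ⊆ W :=
      (Finset.subset_biUnion_of_mem (fun k => (genEdge G k).toFinset) hk).trans hS.subset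
    have hkG := genEdge_mem_edgeSet k
    induction he : genEdge G k with | _ g h
    rw [he] at hkW hkG
    rw [Sym2.toFinset_mk_eq, Finset.insert_subset_iff, Finset.singleton_subset_iff] at hkW
    refine hθG ⟨g, hkW.1⟩ ⟨h, hkW.2⟩ hkG m t ?_ ?_ <;> rintro ⟨j, hj⟩ <;>
      refine ht j (show (t j : Fin n) ∈ genEdge G k from ?_) <;> rw [he, hj]
    exacts [Sym2.mem_mk_left _ _, Sym2.mem_mk_right _ _]
  · obtain ⟨v, hvW, hv⟩ := Finset.exists_of_ssubset hS
    refine ⟨⟨v, hvW⟩, fun k hk hvk => hv (Finset.mem_biUnion.2 ⟨k, hk, ?_⟩)⟩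
    exact Sym2.mem_toFinset.2 hvk

theorem exists_ne_adj_of_reachable_deleteEdges {V : Type*} {H : SimpleGraph V} {a b : V}
    (hne : a ≠ b) (hreach : (H.deleteEdges {s(a, b)}).Reachable a b) : ∃ x ≠ b, H.Adj a x := by
  obtain ⟨_ | ⟨hax, _⟩⟩ := hreach
  · exact absurd rfl hne
  · rw [SimpleGraph.deleteEdges_adj] at hax
    exact ⟨_, fun h => hax.2 (congrArg (s(a, ·)) h), hax.1⟩

theorem exists_star_cover {a b : W} (hab : Gᶜ.Adj a b)
    (hreach : ((Gᶜ.comap ((↑) : W → Fin n)).deleteEdges {s(a, b)}).Reachable a b)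
    (htriangle : ∀ x : W, ¬(Gᶜ.Adj x a ∧ Gᶜ.Adj x b)) :
    ∃ κ : ({a, b}ᶜ : Set W) → Fin (edgeFins G).card,
      (∀ x y : ({a, b}ᶜ : Set W), ((x : W) : Fin n) ∈ genEdge G (κ y) ↔ x = y) ∧
      (Finset.univ.image κ).biUnion (fun k => (genEdge G k).toFinset) = W := by
  have hne : a ≠ b := fun h => hab.ne (congrArg _ h)
  have hstar (x : ({a, b}ᶜ : Set W)) :
      ∃ k, ∃ y : W, (y = a ∨ y = b) ∧ G.Adj (x : W) y ∧
        genEdge G k = s(((x : W) : Fin n), (y : Fin n)) := by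
    obtain ⟨x, hx⟩ := x
    rw [Set.mem_compl_iff, Set.mem_insert_iff, Set.mem_singleton_iff, not_or] at hx
    have hGx : G.Adj x a ∨ G.Adj x b := by
      by_contra! h
      exact htriangle x ⟨⟨Subtype.coe_ne_coe.2 hx.1, h.1⟩, ⟨Subtype.coe_ne_coe.2 hx.2, h.2⟩⟩
    rcases hGx with h | h
    · exact (exists_genEdge_eq h).imp fun k hk => ⟨a, Or.inl rfl, h, hk⟩
    · exact (exists_genEdge_eq h).imp fun k hk => ⟨b, Or.inr rfl, h, hk⟩
  choose κ q hq hadj hκ using hstar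
  have hqa : ∃ y, q y = a := by
    obtain ⟨x, hxa, hbx⟩ :=
      exists_ne_adj_of_reachable_deleteEdges hne.symm (Sym2.eq_swap ▸ hreach.symm)
    exact ⟨⟨x, by simp [hxa, hbx.ne']⟩, (hq _).resolve_right fun h => hbx.2 (h ▸ hadj _).symm⟩
  have hqb : ∃ y, q y = b := by
    obtain ⟨x, hxb, hax⟩ := exists_ne_adj_of_reachable_deleteEdges hne hreach
    exact ⟨⟨x, by simp [hxb, hax.ne']⟩, (hq _).resolve_left fun h => hax.2 (h ▸ hadj _).symm⟩
  refine ⟨κ, fun x y => ?_, ?_⟩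
  · have hxq : (x : W) ≠ q y := fun h => x.2 (h ▸ hq y)
    rw [hκ, Sym2.mem_iff, Subtype.coe_inj, Subtype.coe_inj, Subtype.coe_inj, or_iff_left hxq]
  · refine (Finset.biUnion_subset.2 fun k hk => ?_).antisymm fun v hv => ?_
    · obtain ⟨y, -, rfl⟩ := Finset.mem_image.1 hk
      rw [hκ, Sym2.toFinset_mk_eq, Finset.insert_subset_iff, Finset.singleton_subset_iff]
      exact ⟨y.1.2, (q y).2⟩
    · have hedge {y} (h : v ∈ genEdge G (κ y)) :
          v ∈ (Finset.univ.image κ).biUnion fun k => (genEdge G k).toFinset :=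
        Finset.mem_biUnion.2
          ⟨κ y, Finset.mem_image_of_mem κ (Finset.mem_univ y), Sym2.mem_toFinset.2 h⟩
      by_cases hvab : (⟨v, hv⟩ : W) ∈ ({a, b} : Set W)
      · obtain ⟨y, hy⟩ : ∃ y, q y = ⟨v, hv⟩ := by
          rcases hvab with h | h <;> rw [h]
          exacts [hqa, hqb]
        exact hedge (y := y) (by rw [hκ, hy]; exact Sym2.mem_mk_right _ _)
      · exact hedge (y := ⟨⟨v, hv⟩, hvab⟩) (by rw [hκ]; exact Sym2.mem_mk_left _ _)

theorem exists_gBetti_ne_zero_of_edge {a b : W} (hab : Gᶜ.Adj a b)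
    (hreach : ((Gᶜ.comap ((↑) : W → Fin n)).deleteEdges {s(a, b)}).Reachable a b)
    (htriangle : ∀ x : W, ¬(Gᶜ.Adj x a ∧ Gᶜ.Adj x b)) :
    ∃ i, W.card = i + 3 ∧ gBetti K G i (i + 3) ≠ 0 := by
  obtain ⟨κ, hικ, hcover⟩ := exists_star_cover hab hreach htriangle
  obtain ⟨θ, hclosed, hθ, hθG, hθι⟩ :=
    exists_closed_cochain K (Gᶜ.comap ((↑) : W → Fin n)) hab hreach
  have hcard : Fintype.card ({a, b}ᶜ : Set W) + 2 = W.card := by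
    have hne : a ≠ b := fun h => hab.ne (congrArg _ h)
    rw [← Nat.card_eq_fintype_card, Nat.card_coe_set_eq, ← Set.ncard_pair hne, add_comm,
      Set.ncard_add_ncard_compl, Nat.card_eq_fintype_card, Fintype.card_coe]
  have hpos : 0 < Fintype.card ({a, b}ᶜ : Set W) := by
    obtain ⟨k, hk, -⟩ := Finset.mem_biUnion.1 (hcover.ge a.2)
    obtain ⟨x, -⟩ := Finset.mem_image.1 hk
    exact Fintype.card_pos_iff.2 ⟨x⟩
  obtain ⟨i, hi⟩ := Nat.exists_eq_add_of_lt hpos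
  rw [zero_add] at hi
  have hW : W.card = i + 3 := by rw [← hcard, hi]
  refine ⟨i, hW, hW ▸ gBetti_ne_zero_of_cochain hclosed hθ ?_ ?_ hικ hcover hi⟩
  · exact fun g h hgh => hθG g h (fun e => hgh.ne (congrArg _ e)) fun h' => h'.2 hgh
  · simpa only [Subtype.range_coe] using hθι

theorem le_edgeFins_card_of_gBetti_ne_zero {i j : ℕ} (hij : gBetti K G i j ≠ 0) :
    i ≤ (edgeFins G).card := by
  by_contra! hi
  have hstrand : strand K (edgeGens G) (i + 1) j = ⊥ := by
    refine Submodule.span_eq_bot.2 ?_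
    rintro _ ⟨S, hS, -⟩
    have hcard := Finset.card_le_univ S
    rw [Fintype.card_fin] at hcard
    omega
  exact hij (by rw [gBetti, betti, torRank, hstrand, bot_inf_eq, finrank_bot, Nat.zero_sub])

theorem le_gPd {i j : ℕ} (hij : gBetti K G i j ≠ 0) : i ≤ gPd K G :=
  le_csSup ⟨_, fun _ ⟨_, h⟩ => le_edgeFins_card_of_gBetti_ne_zero h⟩ ⟨j, hij⟩

theorem gIndex_le {i j : ℕ} (hij : i + 2 < j) (hne : gBetti K G i j ≠ 0) : gIndex K G ≤ i :=
  sInf_le ⟨i, j, rfl, hij, hne⟩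

theorem AMFI.le_add_one (h : AMFI K G) {i j i' j' : ℕ} (hij : i + 2 < j)
    (hne : gBetti K G i j ≠ 0) (hne' : gBetti K G i' j' ≠ 0) : i' ≤ i + 1 := by
  have hle : (i' : ℕ∞) ≤ i + 1 := calc
    (i' : ℕ∞) ≤ gPd K G := Nat.cast_le.2 (le_gPd hne')
    _ = gIndex K G + 1 := h.symm
    _ ≤ i + 1 := by gcongr; exact gIndex_le hij hne
  exact_mod_cast hle

end EdgeIdeal
section InducedCycle

/-- `f` enumerates an induced cycle of length `l` of `H` in cyclic order: such an `f` is what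
`HasInducedCycle H l` asks for. -/
structure IsInducedCycle {V : Type*} (H : SimpleGraph V) {l : ℕ} (f : ZMod l → V) : Prop where
  injective : Function.Injective f
  adj_iff : ∀ i j, H.Adj (f i) (f j) ↔ (j = i + 1 ∨ i = j + 1)

variable {l : ℕ}

namespace IsInducedCycle

section Arc

variable {V : Type*} {H : SimpleGraph V} {f : ZMod l → V}

theorem adj_succ (hf : IsInducedCycle H f) (i : ZMod l) : H.Adj (f i) (f (i + 1)) :=
  (hf.adj_iff _ _).2 (Or.inl rfl)

theorem apply_add_natCast_inj (hf : IsInducedCycle H f) {e : ZMod l} {i j : ℕ} (hi : i < l)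
    (hj : j < l) : f (e + i) = f (e + j) ↔ i = j := by
  rw [hf.injective.eq_iff, add_right_inj, (CharP.natCast_injOn_Iio (ZMod l) l).eq_iff hi hj]

theorem not_adj_and_adj_succ (hf : IsInducedCycle H f) (hl : 3 < l) (e i : ZMod l) :
    ¬(H.Adj (f i) (f e) ∧ H.Adj (f i) (f (e + 1))) := by
  have hcast := CharP.natCast_injOn_Iio (ZMod l) l
  have h1 : (1 : ZMod l) ≠ 0 := by
    exact_mod_cast hcast.ne (Set.mem_Iio.2 (by omega)) (Set.mem_Iio.2 (by omega)) one_ne_zero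
  have h3 : (3 : ZMod l) ≠ 0 := by
    exact_mod_cast hcast.ne (Set.mem_Iio.2 hl) (Set.mem_Iio.2 (by omega)) three_ne_zero
  rw [hf.adj_iff, hf.adj_iff]
  rintro ⟨he | he, he' | he'⟩
  · exact h1 (by linear_combination he' - he)
  · exact h3 (by linear_combination -he' - he)
  · exact h1 (by linear_combination -he' - he)
  · exact h1 (by linear_combination he - he')

theorem reachable_arc (hf : IsInducedCycle H f) (hl : 3 < l) {W : Finset V} {a b x y : W}
    {e : ZMod l} (ha : (a : V) = f e) (hb : (b : V) = f (e + 1)) {i j : ℕ} (hi : 0 < i)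
    (hij : i ≤ j) (hj : j ≤ l) (hx : (x : V) = f (e + i)) (hy : (y : V) = f (e + j))
    (hW : ∀ s ∈ Set.Ico i j, f (e + s) ∈ W) :
    ((H.comap ((↑) : W → V)).deleteEdges {s(a, b)}).Reachable x y := by
  induction j, hij using Nat.le_induction generalizing y with
  | base => rw [Subtype.ext (hx.trans hy.symm)]
  | succ j hij ih =>
    refine (ih (y := ⟨f (e + j), hW j ⟨hij, j.lt_succ_self⟩⟩) (by omega) rfl
      fun s hs => hW s ⟨hs.1, hs.2.trans j.lt_succ_self⟩).trans (SimpleGraph.Adj.reachable ?_)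
    rw [Nat.cast_succ, ← add_assoc] at hy
    refine SimpleGraph.deleteEdges_adj.2 ⟨?_, fun h => ?_⟩
    · rw [SimpleGraph.comap_adj, hy]
      exact hf.adj_succ _
    · have hne : f (e + j) ≠ f e := by
        simpa using (hf.apply_add_natCast_inj (e := e) (j := 0) (by omega) (by omega)).not.2
          (by omega : j ≠ 0)
      have hne' : f e ≠ f (e + 2) := by
        simpa using (hf.apply_add_natCast_inj (e := e) (i := 0) (j := 2) (by omega)
          (by omega)).not.2 (by omega)
      rcases Sym2.eq_iff.1 h with ⟨h, -⟩ | ⟨hjb, hya⟩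
      · exact hne ((congrArg Subtype.val h).trans ha)
      · have hj1 : e + (j : ZMod l) = e + 1 :=
          hf.injective ((congrArg Subtype.val hjb).trans hb)
        refine hne' ?_
        rw [← ha, ← hya, hy, hj1, add_assoc, one_add_one_eq_two]

theorem reachable_detour (hf : IsInducedCycle H f) (hl : 3 < l) {W : Finset V} {v a b : W}
    (hv : (v : V) ∉ Set.range f) {e : ZMod l} (ha : (a : V) = f e) (hb : (b : V) = f (e + 1))
    {i j : ℕ} (hi : 0 < i) (hil : i ≤ l) (hj : 0 < j) (hjl : j ≤ l) (hvi : H.Adj v (f (e + i)))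
    (hvj : H.Adj v (f (e + j))) (hWi : ∀ s ∈ Set.Icc 1 i, f (e + s) ∈ W)
    (hWj : ∀ s ∈ Set.Icc j l, f (e + s) ∈ W) :
    ((H.comap ((↑) : W → V)).deleteEdges {s(a, b)}).Reachable b a := by
  have hvadj {x : W} (hx : H.Adj v x) :
      ((H.comap ((↑) : W → V)).deleteEdges {s(a, b)}).Adj v x := by
    refine SimpleGraph.deleteEdges_adj.2 ⟨hx, fun h => hv ?_⟩
    rcases Sym2.eq_iff.1 h with ⟨rfl, -⟩ | ⟨rfl, -⟩
    exacts [⟨e, ha.symm⟩, ⟨e + 1, hb.symm⟩]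
  let x : W := ⟨f (e + i), hWi i ⟨hi, le_rfl⟩⟩
  let y : W := ⟨f (e + j), hWj j ⟨le_rfl, hjl⟩⟩
  have hbx : ((H.comap ((↑) : W → V)).deleteEdges {s(a, b)}).Reachable b x :=
    hf.reachable_arc hl ha hb one_pos hi hil (by rw [hb, Nat.cast_one]) rfl
      fun s hs => hWi s ⟨hs.1, hs.2.le⟩
  have hya : ((H.comap ((↑) : W → V)).deleteEdges {s(a, b)}).Reachable y a :=
    hf.reachable_arc hl ha hb hj hjl le_rfl rfl (by rw [ha, ZMod.natCast_self, add_zero])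
      fun s hs => hWj s ⟨hs.1, hs.2.le⟩
  have hxv := (hvadj (x := x) hvi).symm.reachable
  exact ((hbx.trans hxv).trans (hvadj (x := y) hvj).reachable).trans hya

end Arc

variable {K : Type} [Field K] {n : ℕ} {G : SimpleGraph (Fin n)} {f : ZMod l → Fin n}

theorem gBetti_ne_zero (hf : IsInducedCycle Gᶜ f) (hl : 3 < l) {A : Finset (Fin n)}
    (hA : ∀ x ∈ A, x ∉ Set.range f) {e : ZMod l}
    (he : ∀ x ∈ A, ¬(Gᶜ.Adj x (f e) ∧ Gᶜ.Adj x (f (e + 1)))) {i : ℕ} (hi : i + 3 = l + A.card) :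
    gBetti K G i (i + 3) ≠ 0 := by
  have : NeZero l := ⟨by omega⟩
  let W := Finset.univ.image f ∪ A
  have hfW (i) : f i ∈ W := Finset.mem_union_left _ (Finset.mem_image_of_mem f (Finset.mem_univ i))
  have hcard : W.card = l + A.card := by
    rw [Finset.card_union_of_disjoint, Finset.card_image_of_injective _ hf.injective,
      Finset.card_univ, ZMod.card]
    exact Finset.disjoint_right.2 fun x hx => by simpa using hA x hx
  let a : W := ⟨f e, hfW e⟩
  let b : W := ⟨f (e + 1), hfW _⟩
  have hreach : ((Gᶜ.comap ((↑) : W → Fin n)).deleteEdges {s(a, b)}).Reachable b a :=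
    hf.reachable_arc hl rfl rfl one_pos (by omega) le_rfl (by simp [b]) (by simp [a])
      fun _ _ => hfW _
  have htriangle (x : W) : ¬(Gᶜ.Adj x a ∧ Gᶜ.Adj x b) := by
    rcases Finset.mem_union.1 x.2 with hx | hx
    · obtain ⟨i, -, hx⟩ := Finset.mem_image.1 hx
      exact hx ▸ hf.not_adj_and_adj_succ hl e i
    · exact he x hx
  obtain ⟨i', hi', hne⟩ :=
    exists_gBetti_ne_zero_of_edge (K := K) (hf.adj_succ e) hreach.symm htriangle
  obtain rfl : i' = i := by omega
  exact hne

theorem le_add_two_of_adj_of_adj (hf : IsInducedCycle Gᶜ f) (hl : 3 < l)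
    (hmin : ∀ i, gBetti K G i (i + 3) ≠ 0 → l ≤ i + 3) {v : Fin n} (hv : v ∉ Set.range f)
    {e : ZMod l} (hve : ¬Gᶜ.Adj v (f e)) {i j : ℕ} (hi : 0 < i) (hij : i < j) (hj : j < l)
    (hvi : Gᶜ.Adj v (f (e + i))) (hvj : Gᶜ.Adj v (f (e + j))) : j ≤ i + 2 := by
  -- Replacing the arc from `i` to `j` by a detour through `v` gives a closed walk in `W`.
  let W := insert v ((Finset.Icc 1 i ∪ Finset.Icc j l).image fun s : ℕ => f (e + s))
  have hcard : W.card ≤ i + (l + 1 - j) + 1 := calc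
    W.card ≤ _ := Finset.card_insert_le _ _
    _ ≤ _ := by grw [Finset.card_image_le, Finset.card_union_le, Nat.card_Icc, Nat.card_Icc]; omega
  have hfW (s : ℕ) (hs : s ∈ Finset.Icc 1 i ∪ Finset.Icc j l) : f (e + s) ∈ W :=
    Finset.mem_insert_of_mem (Finset.mem_image_of_mem _ hs)
  have hW₁ (s : ℕ) (hs : s ∈ Set.Icc 1 i) : f (e + s) ∈ W :=
    hfW s (Finset.mem_union_left _ (Finset.mem_Icc.2 hs))
  have hW₂ (s : ℕ) (hs : s ∈ Set.Icc j l) : f (e + s) ∈ W :=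
    hfW s (Finset.mem_union_right _ (Finset.mem_Icc.2 hs))
  let a : W := ⟨f e, by simpa using hW₂ l ⟨hj.le, le_rfl⟩⟩
  let b : W := ⟨f (e + 1), by simpa using hW₁ 1 ⟨le_rfl, hi⟩⟩
  have hreach : ((Gᶜ.comap ((↑) : W → Fin n)).deleteEdges {s(a, b)}).Reachable b a :=
    hf.reachable_detour hl (v := ⟨v, Finset.mem_insert_self _ _⟩) hv rfl rfl hi (by omega)
      (by omega) hj.le hvi hvj hW₁ hW₂
  have htriangle (x : W) : ¬(Gᶜ.Adj x a ∧ Gᶜ.Adj x b) := by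
    rintro hxab
    rcases Finset.mem_insert.1 x.2 with hx | hx
    · exact hve (hx ▸ hxab.1)
    · obtain ⟨s, -, hx⟩ := Finset.mem_image.1 hx
      exact hf.not_adj_and_adj_succ hl e _ (hx ▸ hxab)
  obtain ⟨k, hk, hne⟩ :=
    exists_gBetti_ne_zero_of_edge (K := K) (hf.adj_succ e) hreach.symm htriangle
  have hlk := hmin k hne
  omega

theorem exists_eq_or_eq_of_adj_of_adj_succ (hf : IsInducedCycle Gᶜ f) (hl : 3 < l)
    (hmin : ∀ i, gBetti K G i (i + 3) ≠ 0 → l ≤ i + 3) {v : Fin n} (hv : v ∉ Set.range f)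
    (hvf : ¬∀ d, Gᶜ.Adj v (f d)) :
    ∃ c, ∀ d, Gᶜ.Adj v (f d) ∧ Gᶜ.Adj v (f (d + 1)) → d = c ∨ d = c + 1 := by
  obtain ⟨e, hve⟩ := not_forall.1 hvf
  have : NeZero l := ⟨by omega⟩
  have hoffset (d : ZMod l) : ∃ k < l, d = e + (k : ZMod l) :=
    ⟨(d - e).val, ZMod.val_lt _, by rw [ZMod.natCast_zmod_val, add_sub_cancel]⟩
  by_cases hex : ∃ k : ℕ, Gᶜ.Adj v (f (e + k))
  · obtain ⟨i, hi, himin⟩ : ∃ i : ℕ, Minimal (fun k : ℕ => Gᶜ.Adj v (f (e + k))) i :=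
      exists_minimal_of_wellFoundedLT _ hex
    refine ⟨e + i, fun d ⟨hd, hd'⟩ => ?_⟩
    obtain ⟨k, hk, rfl⟩ := hoffset d
    have hik : i ≤ k := le_of_not_gt fun h => (himin hd h.le).not_gt h
    have hi0 : 0 < i := Nat.pos_of_ne_zero fun h => hve (by simpa [h] using hi)
    have hkl : k + 1 ≠ l := fun h => hve (by
      rwa [add_assoc, ← Nat.cast_succ, Nat.succ_eq_add_one, h, ZMod.natCast_self, add_zero] at hd')
    have hd'' : Gᶜ.Adj v (f (e + (k + 1 : ℕ))) := by rwa [Nat.cast_succ, ← add_assoc]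
    have hki := hf.le_add_two_of_adj_of_adj hl hmin hv hve hi0 (by omega) (by omega) hi hd''
    obtain rfl | rfl : k = i ∨ k = i + 1 := by omega
    · exact Or.inl rfl
    · exact Or.inr (by rw [Nat.cast_succ, add_assoc])
  · refine ⟨0, fun d ⟨hd, _⟩ => ?_⟩
    obtain ⟨k, -, rfl⟩ := hoffset d
    exact absurd ⟨k, hd⟩ hex

theorem exists_not_adj_and_adj_succ (hf : IsInducedCycle Gᶜ f) (hl : 4 < l)
    (hmin : ∀ i, gBetti K G i (i + 3) ≠ 0 → l ≤ i + 3) {v w : Fin n} (hv : v ∉ Set.range f)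
    (hw : w ∉ Set.range f) (hvf : ¬∀ d, Gᶜ.Adj v (f d)) (hwf : ¬∀ d, Gᶜ.Adj w (f d)) :
    ∃ e, ¬(Gᶜ.Adj v (f e) ∧ Gᶜ.Adj v (f (e + 1))) ∧ ¬(Gᶜ.Adj w (f e) ∧ Gᶜ.Adj w (f (e + 1))) := by
  have : NeZero l := ⟨by omega⟩
  obtain ⟨c, hc⟩ := hf.exists_eq_or_eq_of_adj_of_adj_succ (by omega) hmin hv hvf
  obtain ⟨d, hd⟩ := hf.exists_eq_or_eq_of_adj_of_adj_succ (by omega) hmin hw hwf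
  obtain ⟨e, -, he⟩ : ∃ e ∈ Finset.univ, e ∉ ({c, c + 1, d, d + 1} : Finset (ZMod l)) := by
    refine Finset.exists_mem_notMem_of_card_lt_card (Finset.card_le_four.trans_lt ?_)
    rwa [Finset.card_univ, ZMod.card]
  simp only [Finset.mem_insert, Finset.mem_singleton, not_or] at he
  exact ⟨e, fun h => (hc e h).elim he.1 he.2.1, fun h => (hd e h).elim he.2.2.1 he.2.2.2⟩

end IsInducedCycle

end InducedCycle

end EP

/-- If `I(G)` has almost maximal finite index with `index(I(G)) > 1`, and
`C` is an induced cycle of length `> 3` in the complement `Ḡ`, then at most one vertex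
outside `C` fails to be adjacent in `Ḡ` to all vertices of `C`. -/
theorem statement8 (K : Type) [Field K] (n : ℕ) (G : SimpleGraph (Fin n))
    (h : EP.AMFI K G) (hidx : 1 < EP.gIndex K G)
    (l : ℕ) (hl : 3 < l) (f : ZMod l → Fin n) (hinj : Function.Injective f)
    (hcyc : ∀ i j : ZMod l, (Gᶜ).Adj (f i) (f j) ↔ (j = i + 1 ∨ i = j + 1)) :
    ∀ v w : Fin n, v ∉ Set.range f → w ∉ Set.range f →
      (¬ ∀ i : ZMod l, (Gᶜ).Adj v (f i)) → (¬ ∀ i : ZMod l, (Gᶜ).Adj w (f i)) → v = w := by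
  have hf : EP.IsInducedCycle Gᶜ f := ⟨hinj, hcyc⟩
  intro v w hv hw hvf hwf
  by_contra hvw
  obtain ⟨i, rfl⟩ := Nat.exists_eq_add_of_le' hl.le
  have hC : EP.gBetti K G i (i + 3) ≠ 0 :=
    hf.gBetti_ne_zero hl (A := ∅) (e := 0) (by simp) (by simp) rfl
  have hi : 1 < i := by exact_mod_cast hidx.trans_le (EP.gIndex_le (by omega) hC)
  obtain ⟨d, hvd⟩ := not_forall.1 hvf
  have hCv : EP.gBetti K G (i + 1) (i + 4) ≠ 0 :=
    hf.gBetti_ne_zero hl (A := {v}) (e := d) (by simpa only [Finset.mem_singleton, forall_eq])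
      (by simpa only [Finset.mem_singleton, forall_eq] using fun hd => hvd hd.1) rfl
  have hmin (j : ℕ) (hj : EP.gBetti K G j (j + 3) ≠ 0) : i + 3 ≤ j + 3 := by
    have hij := h.le_add_one (by omega) hj hCv
    omega
  obtain ⟨e, hve, hwe⟩ := hf.exists_not_adj_and_adj_succ (by omega) hmin hv hw hvf hwf
  have hCvw : EP.gBetti K G (i + 2) (i + 5) ≠ 0 :=
    hf.gBetti_ne_zero hl (A := {v, w}) (e := e)
      (by simpa only [Finset.mem_insert, Finset.mem_singleton, forall_eq_or_imp, forall_eq] using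
        ⟨hv, hw⟩)
      (by simpa only [Finset.mem_insert, Finset.mem_singleton, forall_eq_or_imp, forall_eq] using
        ⟨hve, hwe⟩)
      (by rw [Finset.card_pair hvw])
  have hle := h.le_add_one (by omega) hC hCvw
  omega
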